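/- Let S be a semigroup, τ : S → S an involution, and z₀ a fixed element of the center of S. If f : S → ℂ is a non-zero function satisfying f(x τ(y) z₀) − f(x y z₀) = 2 f(x) f(y) for all x, y ∈ S, then there exists a multiplicative function χ : S → ℂ (i.e. χ(xy) = χ(x)χ(y) for all x, y ∈ S) with χ(z₀) ≠ 0 and χ(τ(z₀)) = −χ(z₀) such that f(x) = χ(τ(z₀)) · (χ(x) − χ(τ(x)))/2 for all x ∈ S. -/

import Mathlib

/-!
Write `z` for `z₀`, `x⋆` for `τ x`, and `F x = f (x * z)`. The equation forces `f` to be odd under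
`⋆`, and then `f (x * z * z⋆) = f x * f z` and `f (x * z * z) = -(f x * f z)`. Substituting `x * z`
and `y * z` for `x` and `y` turns the equation into addition laws of cosine and sine type for `F`
and `f`, with `f z` as normalising constant. Hence `(F + c f) / f z` is multiplicative as soon as
`c ^ 2 = -f z`; since `F` is even and vanishes at `z`, this character takes the value `c` at `z` and
has `f` as its odd part up to a factor.
-/

/-- `f` solves Van Vleck's functional equation for the sine with parameter `z`. The involution of
the semigroup is encoded by `star`. -/
def IsVanVleck {S R : Type*} [Mul S] [Star S] [CommRing R] (z : S) (f : S → R) : Prop :=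
  ∀ x y : S, f (x * star y * z) - f (x * y * z) = 2 * f x * f y

namespace IsVanVleck

variable {S R : Type*} [Semigroup S] [StarMul S] [CommRing R] [NoZeroDivisors R] [NeZero (2 : R)]
  {z : S} {f : S → R}

theorem map_star (hf : IsVanVleck z f) (y : S) : f (star y) = -f y := by
  have product_eq_zero (x : S) : 2 * (f x * (f (star y) + f y)) = 0 := by
    have at_star := hf x (star y)
    rw [star_star] at at_star
    linear_combination -hf x y - at_star
  have square_eq_zero : 2 * ((f (star y) + f y) * (f (star y) + f y)) = 0 := by
    linear_combination product_eq_zero (star y) + product_eq_zero y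
  simpa [two_ne_zero, add_eq_zero_iff_eq_neg] using square_eq_zero

theorem map_mul_mul_star (hf : IsVanVleck z f) (hz : z ∈ Set.center S) (x : S) :
    f (x * z * star z) = f x * f z := by
  have hz' := Set.star_mem_center hz
  have commute : star z * x * z = x * z * star z := by
    rw [mul_assoc, (hz'.comm (x * z)).eq]
  have reflect : f (star z * star x * z) = -f (x * z * star z) := by
    rw [← hf.map_star, star_mul, star_mul, star_star, ← mul_assoc, hz.right_comm,
      (hz.comm (star z)).eq]
  have equation := hf (star z) x
  rw [reflect, commute, hf.map_star] at equation
  apply mul_left_cancel₀ (two_ne_zero' R)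
  linear_combination -equation

theorem map_mul_mul_self (hf : IsVanVleck z f) (hz : z ∈ Set.center S) (x : S) :
    f (x * z * z) = -(f x * f z) := by
  have equation := hf x z
  rw [hz.right_comm, hf.map_mul_mul_star hz] at equation
  linear_combination -equation

theorem cosine_addition (hf : IsVanVleck z f) (hz : z ∈ Set.center S) (x y : S) :
    f z * f (x * y * z) = f (x * z) * f (y * z) - f z * f x * f y := by
  have hz' := Set.star_mem_center hz
  have equation := hf (x * z) (y * z)
  have minus_arg : x * z * star (y * z) * z = x * star y * z * z * star z := by
    rw [star_mul, ← mul_assoc, ← hz'.right_comm (x * z), ← hz.right_comm x, ← hz'.right_comm]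
  have plus_arg : x * z * (y * z) * z = x * y * z * z * z := by
    rw [← mul_assoc, ← hz.right_comm x]
  rw [minus_arg, plus_arg, hf.map_mul_mul_star hz, hf.map_mul_mul_self hz] at equation
  apply mul_left_cancel₀ (two_ne_zero' R)
  linear_combination equation - f z * hf x y

theorem apply_ne_zero (hf : IsVanVleck z f) (hz : z ∈ Set.center S) (hne : f ≠ 0) : f z ≠ 0 := by
  intro hfz
  have map_mul_eq_zero (x : S) : f (x * z) = 0 := by
    simpa [hfz] using hf.cosine_addition hz x x
  refine hne (funext fun x ↦ ?_)
  simpa [map_mul_eq_zero, two_ne_zero] using hf x x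

theorem sine_addition (hf : IsVanVleck z f) (hz : z ∈ Set.center S) (x y : S) :
    f z * f (x * y) = f (x * z) * f y + f x * f (y * z) := by
  obtain rfl | hne := eq_or_ne f 0
  · simp
  have cosine := hf.cosine_addition hz x (y * z)
  rw [← mul_assoc, hf.map_mul_mul_self hz, hf.map_mul_mul_self hz] at cosine
  apply mul_left_cancel₀ (hf.apply_ne_zero hz hne)
  linear_combination -cosine

theorem map_mul_star (hf : IsVanVleck z f) (hz : z ∈ Set.center S) (x : S) :
    f (x * star z) = -f (x * z) := by
  obtain rfl | hne := eq_or_ne f 0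
  · simp
  have hz' := Set.star_mem_center hz
  have commute : x * star z * z * z = x * z * z * star z := by
    rw [← hz'.right_comm x, ← hz'.right_comm (x * z)]
  have values := congrArg f commute
  rw [hf.map_mul_mul_self hz, hf.map_mul_mul_star hz] at values
  apply mul_right_cancel₀ (hf.apply_ne_zero hz hne)
  linear_combination -values

theorem map_star_mul (hf : IsVanVleck z f) (hz : z ∈ Set.center S) (x : S) :
    f (star x * z) = f (x * z) := by
  rw [← neg_inj, ← hf.map_star, star_mul, star_star, ((Set.star_mem_center hz).comm x).eq,
    hf.map_mul_star hz]

theorem map_mul_self (hf : IsVanVleck z f) (hz : z ∈ Set.center S) : f (z * z) = 0 := by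
  have cosine := hf.cosine_addition hz z z
  rw [hf.map_mul_mul_self hz] at cosine
  apply mul_self_eq_zero.mp
  linear_combination -cosine

section Character

variable {K : Type*} [Field K] [NeZero (2 : K)] {f : S → K} {c : K}

/-- The multiplicative function attached to a nonzero solution `f` of Van Vleck's equation and a
square root `c` of `-f z`; up to a factor, `f` is its odd part with respect to `star`. -/
def character (hf : IsVanVleck z f) (hz : z ∈ Set.center S) (hne : f ≠ 0) (hc : -f z = c * c) :
    S →ₙ* K where
  toFun x := (f (x * z) + c * f x) / f z
  map_mul' x y := by
    have hfz := hf.apply_ne_zero hz hne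
    field_simp
    linear_combination hf.cosine_addition hz x y + c * hf.sine_addition hz x y +
      f x * f y * hc

theorem character_apply (hf : IsVanVleck z f) (hz : z ∈ Set.center S) (hne : f ≠ 0)
    (hc : -f z = c * c) (x : S) :
    hf.character hz hne hc x = (f (x * z) + c * f x) / f z :=
  rfl

theorem character_star (hf : IsVanVleck z f) (hz : z ∈ Set.center S) (hne : f ≠ 0)
    (hc : -f z = c * c) (x : S) :
    hf.character hz hne hc (star x) = (f (x * z) - c * f x) / f z := by
  rw [character_apply, hf.map_star, hf.map_star_mul hz, mul_neg, sub_eq_add_neg]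

theorem character_self (hf : IsVanVleck z f) (hz : z ∈ Set.center S) (hne : f ≠ 0)
    (hc : -f z = c * c) : hf.character hz hne hc z = c := by
  rw [character_apply, hf.map_mul_self hz, zero_add,
    mul_div_cancel_right₀ c (hf.apply_ne_zero hz hne)]

theorem character_star_self (hf : IsVanVleck z f) (hz : z ∈ Set.center S) (hne : f ≠ 0)
    (hc : -f z = c * c) : hf.character hz hne hc (star z) = -c := by
  rw [character_star, hf.map_mul_self hz, zero_sub, neg_div,
    mul_div_cancel_right₀ c (hf.apply_ne_zero hz hne)]

theorem character_sub_character_star (hf : IsVanVleck z f) (hz : z ∈ Set.center S) (hne : f ≠ 0)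
    (hc : -f z = c * c) (x : S) :
    hf.character hz hne hc x - hf.character hz hne hc (star x) = 2 * (c * f x / f z) := by
  rw [character_apply, character_star]
  ring

end Character

end IsVanVleck

theorem stmt_11_general {S K : Type*} [Semigroup S] [StarMul S] [Field K] [NeZero (2 : K)]
    {z : S} (hz : z ∈ Set.center S) {f : S → K} (hne : f ≠ 0) (hf : IsVanVleck z f)
    (hsq : IsSquare (-f z)) :
    ∃ χ : S →ₙ* K, χ z ≠ 0 ∧ χ (star z) = -χ z ∧
      ∀ x : S, f x = χ (star z) * ((χ x - χ (star x)) / 2) := by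
  obtain ⟨c, hc⟩ := hsq
  have hfz : f z ≠ 0 := hf.apply_ne_zero hz hne
  have hc₀ : c ≠ 0 := by
    rintro rfl
    exact hfz (by simpa using hc)
  refine ⟨hf.character hz hne hc, ?_, ?_, fun x ↦ ?_⟩
  · rwa [hf.character_self]
  · rw [hf.character_star_self, hf.character_self]
  · rw [hf.character_star_self, hf.character_sub_character_star]
    field_simp
    linear_combination -f x * hc

theorem stmt_11 {S : Type*} [Semigroup S] (τ : S → S)
    (hτmul : ∀ x y : S, τ (x * y) = τ y * τ x)
    (hτinv : ∀ x : S, τ (τ x) = x)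
    (z₀ : S) (hz₀ : ∀ s : S, z₀ * s = s * z₀)
    (f : S → ℂ) (hf : f ≠ 0)
    (hVV : ∀ x y : S, f (x * τ y * z₀) - f (x * y * z₀) = 2 * f x * f y) :
    ∃ χ : S → ℂ, (∀ x y : S, χ (x * y) = χ x * χ y) ∧
      χ z₀ ≠ 0 ∧ χ (τ z₀) = -χ z₀ ∧
      ∀ x : S, f x = χ (τ z₀) * ((χ x - χ (τ x)) / 2) := by
  let _ : StarMul S := { star := τ, star_involutive := hτinv, star_mul := hτmul }
  obtain ⟨χ, hχ⟩ := stmt_11_general (Semigroup.mem_center_iff.mpr fun s ↦ (hz₀ s).symm) hf hVV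
    (IsAlgClosed.exists_eq_mul_self (-f z₀))
  exact ⟨χ, map_mul χ, hχ⟩
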